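/- arXiv:2205.08672 — 4 statements merged into one kernel-verified Lean document; each statement's English description precedes it below -/
import Mathlib

section
/- With the notation of the context, the map z ↦ z^{2} := z₀^[2] + q(z₁) + ⁅z₁,z₀⁆ is a 2-operation on the Lie algebra L; that is, for all α ∈ k and z, w ∈ L: (R1) (α•z)^{2} = α²•(z^{2}); (R2) ⁅z^{2}, w⁆ = ⁅z, ⁅z, w⁆⁆; (R3) (z+w)^{2} = z^{2} + w^{2} + ⁅w, z⁆. Hence L, with this 2-operation, is a restricted Lie algebra over k. -/
/-- Lemma 2.12 of the paper (first assertion): for a restricted Lie superalgebra `L` over a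
field `k` of characteristic `2` — encoded as an ordinary `ℤ/2`-graded Lie algebra
`L = L₀ ⊕ L₁` with quadratic operator `q : L₁ → L₀` and 2-map `x ↦ x^[2]` on `L₀` — the map
`z = z₀ + z₁ ↦ z^{2} := z₀^[2] + q(z₁) + ⁅z₁, z₀⁆` is a 2-operation on the underlying
ordinary Lie algebra `L`, i.e. it satisfies (R1) `(α•z)^{2} = α²•z^{2}`,
(R2) `⁅z^{2}, w⁆ = ⁅z, ⁅z, w⁆⁆`, and (R3) `(z+w)^{2} = z^{2} + w^{2} + ⁅w, z⁆`,
making `L` a restricted Lie algebra over `k`. -/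
theorem restricted_two_operation_on_underlying_lie_algebra
    (k : Type*) [Field k] [CharP k 2]
    (L : Type*) [LieRing L] [LieAlgebra k L]
    (L₀ L₁ : Submodule k L)
    (p₀ p₁ : L → L)
    (hmem : ∀ z : L, p₀ z ∈ L₀ ∧ p₁ z ∈ L₁ ∧ z = p₀ z + p₁ z)
    (huniq : ∀ z x y : L, x ∈ L₀ → y ∈ L₁ → z = x + y → p₀ z = x ∧ p₁ z = y)
    (hb00 : ∀ x ∈ L₀, ∀ x' ∈ L₀, ⁅x, x'⁆ ∈ L₀)
    (hb01 : ∀ x ∈ L₀, ∀ y ∈ L₁, ⁅x, y⁆ ∈ L₁)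
    (hb11 : ∀ y ∈ L₁, ∀ y' ∈ L₁, ⁅y, y'⁆ ∈ L₀)
    (q : L → L)
    (hq_mem : ∀ y ∈ L₁, q y ∈ L₀)
    (hq_smul : ∀ (α : k), ∀ y ∈ L₁, q (α • y) = (α ^ 2) • q y)
    (hq_add : ∀ y ∈ L₁, ∀ y' ∈ L₁, q (y + y') = q y + q y' + ⁅y, y'⁆)
    (hq_ad : ∀ y ∈ L₁, ∀ z : L, ⁅y, ⁅y, z⁆⁆ = ⁅q y, z⁆)
    (sq : L → L)
    (hsq_mem : ∀ x ∈ L₀, sq x ∈ L₀)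
    (hsq_smul : ∀ (α : k), ∀ x ∈ L₀, sq (α • x) = (α ^ 2) • sq x)
    (hsq_ad : ∀ x ∈ L₀, ∀ z : L, ⁅sq x, z⁆ = ⁅x, ⁅x, z⁆⁆)
    (hsq_add : ∀ x ∈ L₀, ∀ x' ∈ L₀, sq (x + x') = sq x + sq x' + ⁅x', x⁆)
    (P : L → L)
    (hP : ∀ z : L, P z = sq (p₀ z) + q (p₁ z) + ⁅p₁ z, p₀ z⁆) :
    (∀ (α : k) (z : L), P (α • z) = (α ^ 2) • P z) ∧
    (∀ z w : L, ⁅P z, w⁆ = ⁅z, ⁅z, w⁆⁆) ∧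
    (∀ z w : L, P (z + w) = P z + P w + ⁅w, z⁆) := by
  have neg_eq (a : L) : -a = a := by
    rw [← neg_one_smul k a, CharTwo.neg_eq, one_smul]
  have lie_comm (a b : L) : ⁅a, b⁆ = ⁅b, a⁆ := by
    rw [← lie_skew, neg_eq]
  have P_add {x y : L} (hx : x ∈ L₀) (hy : y ∈ L₁) : P (x + y) = sq x + q y + ⁅y, x⁆ := by
    obtain ⟨h₀, h₁⟩ := huniq (x + y) x y hx hy rfl
    rw [hP, h₀, h₁]
  have exists_add (z : L) : ∃ x ∈ L₀, ∃ y ∈ L₁, z = x + y :=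
    ⟨p₀ z, (hmem z).1, p₁ z, (hmem z).2.1, (hmem z).2.2⟩
  refine ⟨fun α z => ?_, fun z w => ?_, fun z w => ?_⟩
  · obtain ⟨x, hx, y, hy, rfl⟩ := exists_add z
    rw [smul_add, P_add (L₀.smul_mem α hx) (L₁.smul_mem α hy), P_add hx hy, hsq_smul α x hx,
      hq_smul α y hy, smul_lie, lie_smul, smul_smul, ← pow_two, smul_add, smul_add]
  · obtain ⟨x, hx, y, hy, rfl⟩ := exists_add z
    rw [P_add hx hy]
    simp only [add_lie, lie_add, hsq_ad x hx, ← hq_ad y hy, lie_lie y x w, sub_eq_add_neg,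
      neg_eq ⁅x, ⁅y, w⁆⁆]
    abel
  · obtain ⟨x, hx, y, hy, rfl⟩ := exists_add z
    obtain ⟨x', hx', y', hy', rfl⟩ := exists_add w
    rw [add_add_add_comm, P_add (L₀.add_mem hx hx') (L₁.add_mem hy hy'), P_add hx hy,
      P_add hx' hy', hsq_add x hx x' hx', hq_add y hy y' hy']
    simp only [add_lie, lie_add, lie_comm x' y, lie_comm y' y]
    abel
end

section
/- With the notation of the context, let U(L) be the universal enveloping algebra of the Lie algebra L with canonical map ι : L → U(L). Then for every z ∈ L with decomposition z = z₀ + z₁ (z₀ ∈ L₀, z₁ ∈ L₁), the following identity holds in U(L): ι(z)² − ι(z^{2}) = (ι(z₀)² − ι(z₀^[2])) + (ι(z₁)² − ι(q(z₁))). -/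
/-- The canonical map to the universal enveloping algebra sends brackets to commutators. -/
theorem UniversalEnvelopingAlgebra.ι_lie {R L : Type*} [CommRing R] [LieRing L] [LieAlgebra R L]
    (x y : L) :
    (ι R ⁅x, y⁆ : UniversalEnvelopingAlgebra R L) = ι R x * ι R y - ι R y * ι R x :=
  letI : LieRing (UniversalEnvelopingAlgebra R L) := LieRing.ofAssociativeRing
  LieHom.map_lie (ι R) x y

open UniversalEnvelopingAlgebra in
/-- The key computation in the proof of Lemma 2.12 of the paper: in the universal enveloping
algebra `U(L)` of the ordinary Lie algebra underlying a restricted Lie superalgebra `L`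
over a field of characteristic `2`, for `z = z₀ + z₁` one has
`ι(z)² − ι(z^{2}) = (ι(z₀)² − ι(z₀^[2])) + (ι(z₁)² − ι(q(z₁)))`. -/
theorem universal_enveloping_square_identity
    (k : Type*) [Field k] [CharP k 2]
    (L : Type*) [LieRing L] [LieAlgebra k L]
    (L₀ L₁ : Submodule k L)
    (p₀ p₁ : L → L)
    (hmem : ∀ z : L, p₀ z ∈ L₀ ∧ p₁ z ∈ L₁ ∧ z = p₀ z + p₁ z)
    (huniq : ∀ z x y : L, x ∈ L₀ → y ∈ L₁ → z = x + y → p₀ z = x ∧ p₁ z = y)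
    (hb00 : ∀ x ∈ L₀, ∀ x' ∈ L₀, ⁅x, x'⁆ ∈ L₀)
    (hb01 : ∀ x ∈ L₀, ∀ y ∈ L₁, ⁅x, y⁆ ∈ L₁)
    (hb11 : ∀ y ∈ L₁, ∀ y' ∈ L₁, ⁅y, y'⁆ ∈ L₀)
    (q : L → L)
    (hq_mem : ∀ y ∈ L₁, q y ∈ L₀)
    (hq_smul : ∀ (α : k), ∀ y ∈ L₁, q (α • y) = (α ^ 2) • q y)
    (hq_add : ∀ y ∈ L₁, ∀ y' ∈ L₁, q (y + y') = q y + q y' + ⁅y, y'⁆)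
    (hq_ad : ∀ y ∈ L₁, ∀ z : L, ⁅y, ⁅y, z⁆⁆ = ⁅q y, z⁆)
    (sq : L → L)
    (hsq_mem : ∀ x ∈ L₀, sq x ∈ L₀)
    (hsq_smul : ∀ (α : k), ∀ x ∈ L₀, sq (α • x) = (α ^ 2) • sq x)
    (hsq_ad : ∀ x ∈ L₀, ∀ z : L, ⁅sq x, z⁆ = ⁅x, ⁅x, z⁆⁆)
    (hsq_add : ∀ x ∈ L₀, ∀ x' ∈ L₀, sq (x + x') = sq x + sq x' + ⁅x', x⁆)
    (P : L → L)
    (hP : ∀ z : L, P z = sq (p₀ z) + q (p₁ z) + ⁅p₁ z, p₀ z⁆) :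
    ∀ z : L,
      (ι k z : UniversalEnvelopingAlgebra k L) ^ 2 - ι k (P z) =
        ((ι k (p₀ z) : UniversalEnvelopingAlgebra k L) ^ 2 - ι k (sq (p₀ z))) +
          ((ι k (p₁ z) : UniversalEnvelopingAlgebra k L) ^ 2 - ι k (q (p₁ z))) := by
  intro z
  set a : UniversalEnvelopingAlgebra k L := ι k (p₀ z) with ha
  set b : UniversalEnvelopingAlgebra k L := ι k (p₁ z) with hb
  have hz : (ι k z : UniversalEnvelopingAlgebra k L) = a + b := by
    rw [ha, hb, ← map_add, ← (hmem z).2.2]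
  have h_two : (2 : UniversalEnvelopingAlgebra k L) = 0 := by
    rw [← map_ofNat (algebraMap k (UniversalEnvelopingAlgebra k L)) 2, CharTwo.two_eq_zero, map_zero]
  have h_cancel : a * b + a * b = 0 := by rw [← two_mul, h_two, zero_mul]
  rw [hP, map_add, map_add, ι_lie, ← ha, ← hb, hz,
    ← sub_eq_zero, ← h_cancel]
  noncomm_ring
end

section
/- With the notation of the context, let U(L) be the universal enveloping algebra of the Lie algebra L with canonical map ι : L → U(L). Then the two-sided ideal of U(L) generated by the set { ι(z)² − ι(z^{2}) : z ∈ L } is equal to the two-sided ideal of U(L) generated by the set { ι(x)² − ι(x^[2]) : x ∈ L₀ } ∪ { ι(y)² − ι(q(y)) : y ∈ L₁ }. Consequently, the quotients of U(L) by these two ideals — the restricted enveloping algebra V(ol(L)) of the restricted Lie algebra ol(L) and the restricted enveloping superalgebra V(L) of the restricted Lie superalgebra L — are canonically isomorphic as k-algebras. -/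
attribute [local instance 100] LieRing.ofAssociativeRing in
open UniversalEnvelopingAlgebra in
/-- In the universal enveloping algebra over a ring of characteristic two, squaring is additive
up to the bracket. -/
theorem UniversalEnvelopingAlgebra.ι_add_sq {k : Type*} [CommRing k] [CharP k 2]
    {L : Type*} [LieRing L] [LieAlgebra k L] (x y : L) :
    ι k (x + y) ^ 2 = ι k x ^ 2 + ι k y ^ 2 + ι k ⁅y, x⁆ := by
  have h2 : (2 : UniversalEnvelopingAlgebra k L) = 0 := by
    rw [← map_ofNat (algebraMap k (UniversalEnvelopingAlgebra k L)) 2, CharTwo.two_eq_zero,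
      map_zero]
  rw [map_add, LieHom.map_lie, LieRing.of_associative_ring_bracket, ← sub_eq_zero]
  calc _ = 2 * (ι k x * ι k y) := by noncomm_ring
    _ = 0 := by rw [h2, zero_mul]

open UniversalEnvelopingAlgebra in
/-- Lemma 2.12 of the paper (last assertion): in `U(L)`, the two-sided ideal generated by
`{ ι(z)² − ι(z^{2}) : z ∈ L }` equals the two-sided ideal generated by
`{ ι(x)² − ι(x^[2]) : x ∈ L₀ } ∪ { ι(y)² − ι(q(y)) : y ∈ L₁ }`; consequently the restricted
enveloping algebra `V(ol(L))` of the restricted Lie algebra `ol(L)` and the restricted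
enveloping superalgebra `V(L)` — the quotients of `U(L)` by these two ideals — are
canonically isomorphic `k`-algebras. -/
theorem restricted_enveloping_algebras_isomorphic
    (k : Type*) [Field k] [CharP k 2]
    (L : Type*) [LieRing L] [LieAlgebra k L]
    (L₀ L₁ : Submodule k L)
    (p₀ p₁ : L → L)
    (hmem : ∀ z : L, p₀ z ∈ L₀ ∧ p₁ z ∈ L₁ ∧ z = p₀ z + p₁ z)
    (huniq : ∀ z x y : L, x ∈ L₀ → y ∈ L₁ → z = x + y → p₀ z = x ∧ p₁ z = y)
    (hb00 : ∀ x ∈ L₀, ∀ x' ∈ L₀, ⁅x, x'⁆ ∈ L₀)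
    (hb01 : ∀ x ∈ L₀, ∀ y ∈ L₁, ⁅x, y⁆ ∈ L₁)
    (hb11 : ∀ y ∈ L₁, ∀ y' ∈ L₁, ⁅y, y'⁆ ∈ L₀)
    (q : L → L)
    (hq_mem : ∀ y ∈ L₁, q y ∈ L₀)
    (hq_smul : ∀ (α : k), ∀ y ∈ L₁, q (α • y) = (α ^ 2) • q y)
    (hq_add : ∀ y ∈ L₁, ∀ y' ∈ L₁, q (y + y') = q y + q y' + ⁅y, y'⁆)
    (hq_ad : ∀ y ∈ L₁, ∀ z : L, ⁅y, ⁅y, z⁆⁆ = ⁅q y, z⁆)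
    (sq : L → L)
    (hsq_mem : ∀ x ∈ L₀, sq x ∈ L₀)
    (hsq_smul : ∀ (α : k), ∀ x ∈ L₀, sq (α • x) = (α ^ 2) • sq x)
    (hsq_ad : ∀ x ∈ L₀, ∀ z : L, ⁅sq x, z⁆ = ⁅x, ⁅x, z⁆⁆)
    (hsq_add : ∀ x ∈ L₀, ∀ x' ∈ L₀, sq (x + x') = sq x + sq x' + ⁅x', x⁆)
    (P : L → L)
    (hP : ∀ z : L, P z = sq (p₀ z) + q (p₁ z) + ⁅p₁ z, p₀ z⁆) :
    TwoSidedIdeal.span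
        {u : UniversalEnvelopingAlgebra k L | ∃ z : L, u = (ι k z) ^ 2 - ι k (P z)} =
      TwoSidedIdeal.span
        ({u : UniversalEnvelopingAlgebra k L | ∃ x ∈ L₀, u = (ι k x) ^ 2 - ι k (sq x)} ∪
          {u : UniversalEnvelopingAlgebra k L | ∃ y ∈ L₁, u = (ι k y) ^ 2 - ι k (q y)}) ∧
    Nonempty
      ((TwoSidedIdeal.span
          {u : UniversalEnvelopingAlgebra k L |
            ∃ z : L, u = (ι k z) ^ 2 - ι k (P z)}).ringCon.Quotient ≃+*
        (TwoSidedIdeal.span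
          ({u : UniversalEnvelopingAlgebra k L | ∃ x ∈ L₀, u = (ι k x) ^ 2 - ι k (sq x)} ∪
            {u : UniversalEnvelopingAlgebra k L |
              ∃ y ∈ L₁, u = (ι k y) ^ 2 - ι k (q y)})).ringCon.Quotient) := by
  have hq_zero : q 0 = 0 := by simpa using hq_smul 0 0 L₁.zero_mem
  have hsq_zero : sq 0 = 0 := by simpa using hsq_smul 0 0 L₀.zero_mem
  have hP_even : ∀ x ∈ L₀, P x = sq x := fun x hx => by
    obtain ⟨h₀, h₁⟩ := huniq x x 0 hx L₁.zero_mem (add_zero x).symm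
    simp [hP, h₀, h₁, hq_zero]
  have hP_odd : ∀ y ∈ L₁, P y = q y := fun y hy => by
    obtain ⟨h₀, h₁⟩ := huniq y 0 y L₀.zero_mem hy (zero_add y).symm
    simp [hP, h₀, h₁, hsq_zero]
  have hideal : TwoSidedIdeal.span
        {u : UniversalEnvelopingAlgebra k L | ∃ z : L, u = (ι k z) ^ 2 - ι k (P z)} =
      TwoSidedIdeal.span
        ({u : UniversalEnvelopingAlgebra k L | ∃ x ∈ L₀, u = (ι k x) ^ 2 - ι k (sq x)} ∪
          {u : UniversalEnvelopingAlgebra k L | ∃ y ∈ L₁, u = (ι k y) ^ 2 - ι k (q y)}) := by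
    apply le_antisymm
    · rw [TwoSidedIdeal.span_le]
      rintro _ ⟨z, rfl⟩
      obtain ⟨h₀, h₁, hz⟩ := hmem z
      have hsplit : ι k z ^ 2 - ι k (P z) =
          (ι k (p₀ z) ^ 2 - ι k (sq (p₀ z))) + (ι k (p₁ z) ^ 2 - ι k (q (p₁ z))) := by
        rw [hP, map_add, map_add]
        nth_rewrite 1 [hz]
        rw [ι_add_sq]
        abel
      rw [hsplit]
      exact TwoSidedIdeal.add_mem _
        (TwoSidedIdeal.subset_span (Or.inl ⟨_, h₀, rfl⟩))
        (TwoSidedIdeal.subset_span (Or.inr ⟨_, h₁, rfl⟩))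
    · apply TwoSidedIdeal.span_mono
      rintro _ (⟨x, hx, rfl⟩ | ⟨y, hy, rfl⟩)
      · exact ⟨x, by rw [hP_even x hx]⟩
      · exact ⟨y, by rw [hP_odd y hy]⟩
  exact ⟨hideal, by rw [hideal]; exact ⟨RingEquiv.refl _⟩⟩
end

section
/- Let k be a field of characteristic 2, let P := k[u,v]/(u² + v²), and let Q be the k-subalgebra of P generated by the image of u + v (so Q ≅ k[z]/(z²)). Let M be a P-module that is finite-dimensional as a k-vector space. Then M is NOT free as a Q-module if and only if M has infinite projective dimension as a P-module. Moreover, the trivial P-module k = P/(u,v) has infinite projective dimension over P. -/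
/-- A module `M` over a ring `R` has finite projective dimension if it admits a projective
resolution that vanishes in all sufficiently large degrees. -/
def HasFiniteProjectiveDimension (R : Type*) [Ring R] (M : Type*) [AddCommGroup M]
    [Module R M] : Prop :=
  ∃ (n : ℕ) (res : CategoryTheory.ProjectiveResolution (ModuleCat.of R M)),
    ∀ i : ℕ, n < i → CategoryTheory.Limits.IsZero (res.complex.X i)

universe w v u

section Resolution

open CategoryTheory CategoryTheory.Limits ZeroObject

variable {C : Type u} [Category.{v} C] [Abelian C]

/-- The objects of the two-term complex attached to a short complex. -/
noncomputable def twoTermX (S : ShortComplex C) : ℕ → C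
  | 0 => S.X₂
  | 1 => S.X₁
  | _ + 2 => 0

/-- The differentials of the two-term complex attached to a short complex. -/
noncomputable def twoTermD (S : ShortComplex C) : ∀ n, twoTermX S (n + 1) ⟶ twoTermX S n
  | 0 => S.f
  | _ + 1 => 0

/-- The complex `⋯ ⟶ 0 ⟶ S.X₁ ⟶ S.X₂` attached to a short complex `S`. -/
noncomputable def twoTermComplex (S : ShortComplex C) : ChainComplex C ℕ :=
  ChainComplex.of (twoTermX S) (twoTermD S) fun n => by
    cases n <;> exact zero_comp

lemma twoTermComplex_d_one_zero (S : ShortComplex C) : (twoTermComplex S).d 1 0 = S.f :=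
  ChainComplex.of_d (twoTermX S) (twoTermD S) 0

/-- The augmentation of the two-term complex of `S` towards `S.X₃`. -/
noncomputable def twoTermπ (S : ShortComplex C) :
    twoTermComplex S ⟶ (ChainComplex.single₀ C).obj S.X₃ :=
  (ChainComplex.toSingle₀Equiv (twoTermComplex S) S.X₃).symm
    ⟨(S.g : twoTermX S 0 ⟶ S.X₃), by rw [twoTermComplex_d_one_zero]; exact S.zero⟩

lemma twoTermπ_f_zero (S : ShortComplex C) : (twoTermπ S).f 0 = S.g :=
  ChainComplex.toSingle₀Equiv_symm_apply_f_zero _ _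

lemma twoTermComplex_exactAt_succ {S : ShortComplex C} (hS : S.ShortExact) (n : ℕ) :
    (twoTermComplex S).ExactAt (n + 1) := by
  cases n with
  | zero =>
    rw [HomologicalComplex.exactAt_iff' _ 2 1 0 (by simp) (by simp)]
    have := hS.mono_f
    rw [ShortComplex.exact_iff_mono]
    · change Mono ((twoTermComplex S).d 1 0)
      rw [twoTermComplex_d_one_zero]
      exact this
    · exact (isZero_zero C).eq_of_src _ _
  | succ n =>
    exact ShortComplex.exact_of_isZero_X₂ _ (isZero_zero C)

/-- The projective resolution of length one attached to a short exact sequence whose first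
two terms are projective. -/
noncomputable def CategoryTheory.ShortComplex.ShortExact.projectiveResolution
    {S : ShortComplex C} (hS : S.ShortExact) [Projective S.X₁] [Projective S.X₂] :
    ProjectiveResolution S.X₃ where
  complex := twoTermComplex S
  projective
    | 0 => inferInstanceAs (Projective S.X₂)
    | 1 => inferInstanceAs (Projective S.X₁)
    | _ + 2 => (isZero_zero C).projective
  π := twoTermπ S
  quasiIso := ⟨fun n => by
    cases n with
    | zero =>
      rw [ChainComplex.quasiIsoAt₀_iff, ShortComplex.quasiIso_iff_of_zeros']
      · refine (ShortComplex.exact_and_epi_g_iff_of_iso ?_).2 ⟨hS.exact, hS.epi_g⟩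
        exact ShortComplex.isoMk (Iso.refl _) (Iso.refl _) (Iso.refl _)
          ((Category.id_comp _).trans
            ((twoTermComplex_d_one_zero S).symm.trans (Category.comp_id _).symm))
          ((Category.id_comp _).trans
            ((twoTermπ_f_zero S).symm.trans (Category.comp_id _).symm))
      all_goals rfl
    | succ n =>
      rw [quasiIsoAt_iff_exactAt']
      · exact twoTermComplex_exactAt_succ hS n
      · apply ChainComplex.exactAt_succ_single_obj⟩

lemma HasFiniteProjectiveDimension.of_shortExact {R : Type u} [Ring R] {A B M : Type v}
    [AddCommGroup A] [AddCommGroup B] [AddCommGroup M] [Module R A] [Module R B] [Module R M]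
    [Module.Projective R A] [Module.Projective R B] {f : A →ₗ[R] B} {g : B →ₗ[R] M}
    (hf : Function.Injective f) (hfg : Function.Exact f g) (hg : Function.Surjective g) :
    HasFiniteProjectiveDimension R M := by
  let S : ShortComplex (ModuleCat.{v} R) :=
    ShortComplex.mk (ModuleCat.ofHom f) (ModuleCat.ofHom g)
      (ModuleCat.hom_ext hfg.linearMap_comp_eq_zero)
  have hS : S.ShortExact :=
    { exact := (ShortComplex.ShortExact.moduleCat_exact_iff_function_exact S).2 hfg
      mono_f := (ModuleCat.mono_iff_injective _).2 hf
      epi_g := (ModuleCat.epi_iff_surjective _).2 hg }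
  have h₁ : Projective S.X₁ :=
    inferInstanceAs (Projective (ModuleCat.of R A))
  have h₂ : Projective S.X₂ :=
    inferInstanceAs (Projective (ModuleCat.of R B))
  refine ⟨1, hS.projectiveResolution, fun i hi => ?_⟩
  obtain ⟨j, rfl⟩ := Nat.exists_eq_add_of_le' hi
  exact isZero_zero _

end Resolution

section PolynomialModule

open Polynomial

variable {R M : Type*} [CommRing R] [AddCommGroup M] [Module R M] [Module R[X] M]
  [IsScalarTower R R[X] M]

variable (R M) in
/-- The multiplication map `R[X] ⊗ M → M`, on polynomials with coefficients in `M`. -/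
noncomputable def PolynomialModule.action : PolynomialModule R M →ₗ[R[X]] M where
  toFun f := eval (X : R[X]) (map R[X] LinearMap.id f)
  map_add' _ _ := by simp only [map_add]
  map_smul' p f := by
    rw [map_smul, eval_smul, Polynomial.algebraMap_eq, Polynomial.eval_map, RingHom.id_apply]
    congr 1
    exact eval₂_C_X

lemma PolynomialModule.action_single (n : ℕ) (m : M) :
    action R M (single R n m) = (X ^ n : R[X]) • m := by
  change eval (X : R[X]) (map R[X] LinearMap.id (single R n m)) = _
  rw [map_single, eval_single, LinearMap.id_apply]

variable (R M) in
/-- The endomorphism `X ⊗ 1 - 1 ⊗ X` of polynomials with coefficients in `M`. -/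
noncomputable def PolynomialModule.shift :
    PolynomialModule R M →ₗ[R[X]] PolynomialModule R M where
  toFun f := (X : R[X]) • f - map R (LinearMap.lsmul R[X] M X |>.restrictScalars R) f
  map_add' _ _ := by simp only [map_add, smul_add]; abel
  map_smul' p f := by
    rw [map_smul, Algebra.algebraMap_self, Polynomial.map_id, RingHom.id_apply, smul_sub,
      smul_comm]

lemma PolynomialModule.shift_single (n : ℕ) (m : M) :
    shift R M (single R n m) = single R (n + 1) m - single R n ((X : R[X]) • m) := by
  change (X : R[X]) • single R n m -
    map R (LinearMap.lsmul R[X] M X |>.restrictScalars R) (single R n m) = _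
  rw [map_single, ← monomial_one_one_eq_X, monomial_smul_single, one_smul, add_comm]
  rfl

lemma PolynomialModule.coeff_shift_succ (f : PolynomialModule R M) (n : ℕ) :
    (shift R M f).coeff (n + 1) = f.coeff n - (X : R[X]) • f.coeff (n + 1) := by
  induction f using induction_linear with
  | zero => simp
  | add f g hf hg => simp only [map_add, coeff_add, Finsupp.add_apply, hf, hg, smul_add]; abel
  | single i m =>
    rw [shift_single, sub_eq_add_neg, coeff_add, Finsupp.add_apply, sub_eq_add_neg]
    congr 1
    · simp [Finsupp.single_apply]
    · have h : -single R i ((X : R[X]) • m) = single R i (-((X : R[X]) • m)) :=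
        (map_neg (lsingle R i) _).symm
      rw [h, coeff_single, coeff_single, Finsupp.single_apply, Finsupp.single_apply]
      split_ifs <;> simp

lemma PolynomialModule.shift_injective : Function.Injective (shift R M) := by
  rw [injective_iff_map_eq_zero]
  intro f hf
  have hstep (n : ℕ) : f.coeff n = (X : R[X]) • f.coeff (n + 1) := by
    rw [← sub_eq_zero, ← coeff_shift_succ, hf, coeff_zero, Finsupp.zero_apply]
  obtain ⟨N, hN⟩ := f.coeff.support.exists_nat_subset_range
  have hlarge (n : ℕ) (hn : N ≤ n) : f.coeff n = 0 := by
    by_contra h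
    have := hN (Finsupp.mem_support_iff.2 h)
    rw [Finset.mem_range] at this
    omega
  have hiter (j n : ℕ) : f.coeff n = (X ^ j : R[X]) • f.coeff (n + j) := by
    induction j with
    | zero => simp
    | succ j ih => rw [ih, hstep (n + j), smul_smul, pow_succ, add_assoc]
  ext n
  rw [hiter N n, hlarge _ (by omega), smul_zero, coeff_zero, Finsupp.zero_apply]

lemma PolynomialModule.action_surjective : Function.Surjective (action R M) := fun m =>
  ⟨single R 0 m, by rw [action_single, pow_zero, one_smul]⟩

lemma PolynomialModule.sub_single_action_mem_range (f : PolynomialModule R M) :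
    f - single R 0 (action R M f) ∈ LinearMap.range (shift R M) := by
  induction f using induction_linear with
  | zero => simp
  | add f g hf hg =>
    convert add_mem hf hg using 1
    rw [map_add, single_add]
    abel
  | single n m =>
    rw [action_single]
    induction n generalizing m with
    | zero => simp
    | succ n ih =>
      convert add_mem (LinearMap.mem_range_self (shift R M) (single R n m))
        (ih ((X : R[X]) • m)) using 1
      rw [shift_single, smul_smul, pow_succ]
      abel

lemma PolynomialModule.exact_shift_action : Function.Exact (shift R M) (action R M) := by
  intro f
  constructor
  · intro hf
    simpa [hf] using sub_single_action_mem_range f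
  · rintro ⟨g, rfl⟩
    induction g using induction_linear with
    | zero => simp
    | add f g hf hg => rw [map_add, map_add, hf, hg, add_zero]
    | single n m => rw [shift_single, map_sub, action_single, action_single, smul_smul,
        ← pow_succ, sub_self]

instance PolynomialModule.projective {N : Type*} [AddCommGroup N] [Module R N]
    [Module.Projective R N] : Module.Projective R[X] (PolynomialModule R N) :=
  .of_equiv' (polynomialTensorProductLEquivPolynomialModule R N)

/-- A module over a ring `S ≅ R[X]` which is projective over `R` has finite projective
dimension over `S`. -/
lemma HasFiniteProjectiveDimension.of_polynomial_equiv {R S M : Type*} [CommRing R] [CommRing S]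
    [Algebra R S] [AddCommGroup M] [Module R M] [Module S M] [IsScalarTower R S M]
    [Module.Projective R M] (e : R[X] ≃ₐ[R] S) : HasFiniteProjectiveDimension S M := by
  let : Module R[X] M := Module.compHom M (e : R[X] →+* S)
  have hsmul (p : R[X]) (m : M) : p • m = e p • m := rfl
  have : IsScalarTower R R[X] M := ⟨fun r p m => by simp only [hsmul, map_smul, smul_assoc]⟩
  let : Module S (PolynomialModule R M) :=
    Module.compHom (PolynomialModule R M) (e.symm : S →+* R[X])
  have hsmul' (s : S) (f : PolynomialModule R M) : s • f = e.symm s • f := rfl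
  let := RingHomInvPair.of_ringEquiv (e : R[X] ≃+* S)
  let := RingHomInvPair.of_ringEquiv (e : R[X] ≃+* S).symm
  have : Module.Projective S (PolynomialModule R M) :=
    Module.Projective.of_equiv (R := R[X])
      ({ AddEquiv.refl (PolynomialModule R M) with
        map_smul' := fun p f => by
          simp [hsmul'] } :
      PolynomialModule R M ≃ₛₗ[((e : R[X] ≃+* S) : R[X] →+* S)] PolynomialModule R M)
  exact .of_shortExact (R := S)
    (f := { PolynomialModule.shift R M with
      map_smul' := fun s f => map_smul (PolynomialModule.shift R M) (e.symm s) f })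
    (g := { PolynomialModule.action R M with
      map_smul' := fun s f => by
        refine (map_smul (PolynomialModule.action R M) (e.symm s) f).trans ?_
        rw [hsmul, e.apply_symm_apply]
        rfl })
    PolynomialModule.shift_injective PolynomialModule.exact_shift_action
    PolynomialModule.action_surjective

end PolynomialModule

section SMulExact

open CategoryTheory

/-- Multiplication by `z` on `M` has its kernel contained in its range. -/
def IsSMulExact {R : Type*} (M : Type*) [CommRing R] [AddCommGroup M] [Module R M] (z : R) : Prop :=
  ∀ x : M, z • x = 0 → ∃ y : M, z • y = x

variable {R : Type*} [CommRing R] {z : R}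

lemma IsSMulExact.of_projective {M : Type*} [AddCommGroup M] [Module R M]
    [Module.Projective R M] (h : IsSMulExact R z) : IsSMulExact M z := by
  classical
  intro x hx
  obtain ⟨s, hs⟩ := Module.projective_def.1 ‹Module.Projective R M›
  have hcoord (m : M) : ∃ r : R, z • r = s x m :=
    h _ (by rw [← Finsupp.smul_apply, ← map_smul, hx, map_zero, Finsupp.zero_apply])
  choose r hr using hcoord
  refine ⟨Finsupp.linearCombination R id (Finsupp.onFinset (s x).support
    (fun m => if s x m = 0 then 0 else r m) fun m hm => ?_), ?_⟩
  · exact Finsupp.mem_support_iff.2 fun h => hm (if_pos h)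
  rw [← map_smul]
  convert hs x using 2
  ext m
  by_cases hm : s x m = 0
  · simp [hm]
  · simpa [hm] using hr m

lemma IsSMulExact.of_exact {A B C : Type*} [AddCommGroup A] [AddCommGroup B] [AddCommGroup C]
    [Module R A] [Module R B] [Module R C] (hz : z * z = 0) {f : A →ₗ[R] B} {g : B →ₗ[R] C}
    (hfg : Function.Exact f g) (hg : Function.Surjective g) (hB : IsSMulExact B z)
    (hA : IsSMulExact (LinearMap.range f) z) : IsSMulExact C z := by
  intro x hx
  obtain ⟨b, rfl⟩ := hg x
  have hb : z • b ∈ LinearMap.range f := (hfg _).1 (by rw [map_smul, hx])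
  obtain ⟨⟨_, a, rfl⟩, ha⟩ := hA ⟨z • b, hb⟩ (Subtype.ext (by simp [smul_smul, hz]))
  have ha' : z • f a = z • b := congrArg Subtype.val ha
  obtain ⟨b', hb'⟩ := hB (b - f a) (by rw [smul_sub, ha', sub_self])
  exact ⟨g b', by rw [← map_smul, hb', map_sub, hfg.apply_apply_eq_zero, sub_zero]⟩

lemma HasFiniteProjectiveDimension.isSMulExact {R : Type u} [CommRing R] [Small.{v} R]
    {M : Type v} [AddCommGroup M] [Module R M] {z : R} (hz : z * z = 0) (hR : IsSMulExact R z)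
    (hM : HasFiniteProjectiveDimension R M) : IsSMulExact M z := by
  obtain ⟨n, res, hres⟩ := hM
  have hX (i : ℕ) : IsSMulExact (res.complex.X i) z := .of_projective hR
  have hrange (j i : ℕ) (hij : n ≤ i + j) :
      IsSMulExact (LinearMap.range (res.complex.d (i + 1) i).hom) z := by
    induction j generalizing i with
    | zero =>
      rintro ⟨_, a, rfl⟩ -
      have : Subsingleton (res.complex.X (i + 1)) :=
        ModuleCat.subsingleton_of_isZero (hres (i + 1) (by omega))
      exact ⟨0, Subtype.ext (by rw [Subsingleton.elim a 0]; simp)⟩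
    | succ j ih =>
      have hex := (ShortComplex.ShortExact.moduleCat_exact_iff_function_exact _).1
        (res.exact_succ i)
      refine .of_exact hz (f := (res.complex.d (i + 2) (i + 1)).hom)
        (g := (res.complex.d (i + 1) i).hom.rangeRestrict) (fun x => ?_)
        (LinearMap.surjective_rangeRestrict _) (hX (i + 1)) (ih (i + 1) (by omega))
      rw [← hex x]
      exact Subtype.ext_iff
  have hex : Function.Exact (res.complex.d 1 0).hom (res.π.f 0).hom :=
    (ShortComplex.ShortExact.moduleCat_exact_iff_function_exact _).1
      (ShortComplex.exact_of_g_is_cokernel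
        (ShortComplex.mk _ _ res.complex_d_comp_π_f_zero) res.isColimitCokernelCofork)
  exact .of_exact hz hex ((ModuleCat.epi_iff_surjective _).1 inferInstance) (hX 0)
    (hrange n 0 (by omega))

end SMulExact

section DualNumbers

variable {k P : Type*} [Field k] [CommRing P] [Algebra k P] {z : P}

lemma Algebra.exists_eq_add_smul_of_mem_adjoin_singleton (hz : z * z = 0) {q : P}
    (hq : q ∈ Algebra.adjoin k {z}) : ∃ a b : k, q = algebraMap k P a + b • z := by
  induction hq using Algebra.adjoin_induction with
  | mem x hx => exact ⟨0, 1, by simpa using hx⟩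
  | algebraMap r => exact ⟨r, 0, by simp⟩
  | add x y _ _ hx hy =>
    obtain ⟨a, b, rfl⟩ := hx
    obtain ⟨c, d, rfl⟩ := hy
    exact ⟨a + c, b + d, by rw [map_add, add_smul]; abel⟩
  | mul x y _ _ hx hy =>
    obtain ⟨a, b, rfl⟩ := hx
    obtain ⟨c, d, rfl⟩ := hy
    refine ⟨a * c, a * d + b * c, ?_⟩
    simp only [Algebra.smul_def, map_add, map_mul]
    linear_combination (algebraMap k P b * algebraMap k P d) * hz

/-- A module on which a square-zero element `z` acts exactly is free over `k[z]`. -/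
lemma IsSMulExact.free_adjoin {M : Type*} [AddCommGroup M] [Module P M] [Module k M]
    [IsScalarTower k P M] (hz : z * z = 0) (hM : IsSMulExact M z) :
    Module.Free (Algebra.adjoin k {z}) M := by
  let Z : M →ₗ[k] M := (Algebra.lsmul k k M z)
  have hZ (m : M) : Z m = z • m := rfl
  have hZZ (m : M) : Z (Z m) = 0 := by rw [hZ, hZ, smul_smul, hz, zero_smul]
  obtain ⟨W, hW⟩ := Submodule.exists_isCompl (LinearMap.ker Z)
  let b := Module.Basis.ofVectorSpace k W
  have hWinj (w : W) (hw : Z w = 0) : w = 0 :=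
    Subtype.ext (Submodule.disjoint_def.1 hW.disjoint _ (LinearMap.mem_ker.2 hw) w.2)
  have hdecomp (q : Algebra.adjoin k {z}) :
      ∃ a b : k, (a = 0 → b = 0 → q = 0) ∧ ∀ m : M, q • m = a • m + Z (b • m) := by
    obtain ⟨a, b, hq⟩ := Algebra.exists_eq_add_smul_of_mem_adjoin_singleton hz q.2
    refine ⟨a, b, fun ha hb => Subtype.ext (by simp [hq, ha, hb]), fun m => ?_⟩
    change (q : P) • m = _
    rw [hq, add_smul, algebraMap_smul, smul_assoc, map_smul, hZ]
  choose α β hαβ hsmul using hdecomp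
  have hli : LinearIndependent (Algebra.adjoin k {z}) fun i => (b i : M) := by
    rw [linearIndependent_iff']
    intro s g hg i hi
    let w : W := ∑ i ∈ s, α (g i) • b i
    let w' : W := ∑ i ∈ s, β (g i) • b i
    have hww' : (w : M) + Z w' = 0 := by
      rw [← hg]
      simp [w, w', hsmul, Finset.sum_add_distrib]
    have hw : w = 0 := hWinj _ (by simpa [hZZ] using congrArg Z hww')
    have hw' : w' = 0 := hWinj _ (by simpa [hw] using hww')
    have hb := linearIndependent_iff'.1 b.linearIndependent
    exact hαβ _ (hb s _ hw i hi) (hb s _ hw' i hi)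
  have hspan : ⊤ ≤ Submodule.span (Algebra.adjoin k {z}) (Set.range fun i => (b i : M)) := by
    set S := Submodule.span (Algebra.adjoin k {z}) (Set.range fun i => (b i : M))
    have hWS (w : W) : (w : M) ∈ S := by
      rw [← b.linearCombination_repr w, Finsupp.linearCombination_apply, Finsupp.sum,
        Submodule.coe_sum]
      exact sum_mem fun i _ => S.smul_of_tower_mem _ (Submodule.subset_span ⟨i, rfl⟩)
    have hsplit (m : M) : ∃ n ∈ LinearMap.ker Z, ∃ w ∈ W, n + w = m :=
      Submodule.mem_sup.1 (hW.sup_eq_top ▸ Submodule.mem_top)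
    intro m _
    obtain ⟨n, hn, w, hw, rfl⟩ := hsplit m
    obtain ⟨y, rfl⟩ := hM n hn
    obtain ⟨n', hn', w', hw', rfl⟩ := hsplit y
    have hn'' : z • n' = 0 := hn'
    rw [smul_add, hn'', zero_add]
    exact add_mem (S.smul_mem ⟨z, Algebra.subset_adjoin rfl⟩ (hWS ⟨w', hw'⟩)) (hWS ⟨w, hw⟩)
  exact .of_basis (.mk hli hspan)

/-- If `P` is generated by `z` and `u` subject only to `z * z = 0`, then it is a polynomial ring
in `u` over `k[z]`. -/
lemma Polynomial.nonempty_algEquiv_of_adjoin {u : P} (htop : Algebra.adjoin k {z, u} = ⊤)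
    (hzz : z * z = 0)
    (hlift : ∀ s c : Polynomial (Algebra.adjoin k {z}), c * c = 0 →
      ∃ ψ : P →ₐ[k] Polynomial (Algebra.adjoin k {z}), ψ u = s ∧ ψ z = c) :
    Nonempty (Polynomial (Algebra.adjoin k {z}) ≃ₐ[Algebra.adjoin k {z}] P) := by
  obtain ⟨ψ, hu, hz⟩ := hlift Polynomial.X (Polynomial.C ⟨z, Algebra.subset_adjoin rfl⟩) <| by
    rw [← map_mul, ← map_zero Polynomial.C]
    exact congrArg _ (Subtype.ext hzz)
  have hC (q : P) (hq : q ∈ Algebra.adjoin k {z}) : ψ q = Polynomial.C ⟨q, hq⟩ := by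
    induction hq using Algebra.adjoin_induction with
    | mem x hx => obtain rfl := hx; exact hz
    | algebraMap r => exact ψ.commutes r
    | add x y hx hy ihx ihy => rw [map_add, ihx, ihy, ← map_add]; rfl
    | mul x y hx hy ihx ihy => rw [map_mul, ihx, ihy, ← map_mul]; rfl
  refine ⟨AlgEquiv.ofBijective (Polynomial.aeval u) ⟨?_, ?_⟩⟩
  · refine Function.LeftInverse.injective (g := ψ) fun p => ?_
    induction p using Polynomial.induction_on' with
    | add p q hp hq => simp only [map_add, hp, hq]
    | monomial n q =>
      rw [Polynomial.aeval_monomial, map_mul, map_pow, hu,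
        ← Polynomial.C_mul_X_pow_eq_monomial]
      exact congrArg (· * _) (hC q q.2)
  · let φ := (Polynomial.aeval (R := Algebra.adjoin k {z}) u).restrictScalars k
    have hle : (⊤ : Subalgebra k P) ≤ φ.range := by
      rw [← htop, Algebra.adjoin_le_iff]
      rintro _ (rfl | rfl)
      · exact ⟨Polynomial.C ⟨_, Algebra.subset_adjoin rfl⟩, Polynomial.aeval_C _ _⟩
      · exact ⟨Polynomial.X, Polynomial.aeval_X _⟩
    exact fun x => hle (Algebra.mem_top (x := x))

end DualNumbers

section Hypersurface

open MvPolynomial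

variable (k : Type*) [Field k]

/-- The ideal `(u² + v²)` of `k[u,v]`. -/
local notation "relI" => Ideal.span {X 0 ^ 2 + (X 1 ^ 2 : MvPolynomial (Fin 2) k)}

/-- The hypersurface ring `k[u,v]/(u² + v²)`. -/
local notation "P" => MvPolynomial (Fin 2) k ⧸ relI

/-- The quotient map onto the hypersurface ring. -/
local notation "toP" => Ideal.Quotient.mk relI

lemma MvPolynomial.X_add_X_ne_zero : (X 0 + X 1 : MvPolynomial (Fin 2) k) ≠ 0 := fun h => by
  simpa using congrArg (aeval (![1, 0] : Fin 2 → k)) h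

lemma hypersurface_small [Small.{w} k] : Small.{w} P :=
  have : Small.{w} (MvPolynomial (Fin 2) k) :=
    small_of_injective (f := fun p (m : Fin 2 →₀ ℕ) => coeff m p) fun p q h =>
      MvPolynomial.ext p q fun m => congrFun h m
  small_of_surjective Ideal.Quotient.mk_surjective

lemma hypersurface_adjoin_eq_top :
    Algebra.adjoin k {toP (X 0 + X 1), toP (X 0)} = ⊤ := by
  refine top_le_iff.1 fun x _ => ?_
  obtain ⟨p, rfl⟩ := Ideal.Quotient.mk_surjective x
  have hz : toP (X 0 + X 1) ∈ Algebra.adjoin k {toP (X 0 + X 1), toP (X 0)} :=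
    Algebra.subset_adjoin (by simp)
  have hu : toP (X 0) ∈ Algebra.adjoin k {toP (X 0 + X 1), toP (X 0)} :=
    Algebra.subset_adjoin (by simp)
  induction p using MvPolynomial.induction_on with
  | C a => exact Subalgebra.algebraMap_mem _ a
  | add p q hp hq => rw [map_add]; exact add_mem (hp trivial) (hq trivial)
  | mul_X p i hp =>
    rw [map_mul]
    refine mul_mem (hp trivial) ?_
    fin_cases i
    · exact hu
    · simpa using sub_mem hz hu

lemma hypersurface_residue_nontrivial : Nontrivial (P ⧸ Ideal.span {toP (X 0), toP (X 1)}) := by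
  let ε : P →+* k := Ideal.Quotient.lift _ (aeval (0 : Fin 2 → k)).toRingHom fun p hp => by
    obtain ⟨q, rfl⟩ := Ideal.mem_span_singleton.1 hp
    simp
  refine Ideal.Quotient.nontrivial_iff.2 fun h => ?_
  have hle : Ideal.span {toP (X 0), toP (X 1)} ≤ RingHom.ker ε := by
    rw [Ideal.span_le]
    rintro _ (rfl | rfl) <;> simp [ε]
  rw [h, top_le_iff] at hle
  exact RingHom.ker_ne_top ε hle

lemma hypersurface_smul_residue (y : P ⧸ Ideal.span {toP (X 0), toP (X 1)}) :
    toP (X 0 + X 1) • y = 0 := by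
  obtain ⟨p, rfl⟩ := Ideal.Quotient.mk_surjective y
  refine Ideal.Quotient.eq_zero_iff_mem.2 (Ideal.mul_mem_right _ _ ?_)
  rw [map_add]
  exact add_mem (Ideal.subset_span (by simp)) (Ideal.subset_span (by simp))

lemma hypersurface_residue_not_isSMulExact :
    ¬ IsSMulExact (P ⧸ Ideal.span {toP (X 0), toP (X 1)}) (toP (X 0 + X 1)) := by
  intro h
  have := hypersurface_residue_nontrivial k
  obtain ⟨x, hx⟩ := exists_ne (0 : P ⧸ Ideal.span {toP (X 0), toP (X 1)})
  obtain ⟨y, rfl⟩ := h x (hypersurface_smul_residue k x)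
  exact hx (hypersurface_smul_residue k y)

variable [CharP k 2]

lemma MvPolynomial.X_add_X_mul_self :
    (X 0 + X 1 : MvPolynomial (Fin 2) k) * (X 0 + X 1) = X 0 ^ 2 + X 1 ^ 2 := by
  rw [← pow_two, CharTwo.add_sq]

lemma hypersurface_mk_mul_self : toP (X 0 + X 1) * toP (X 0 + X 1) = 0 := by
  rw [← map_mul, X_add_X_mul_self, Ideal.Quotient.eq_zero_iff_mem]
  exact Ideal.mem_span_singleton_self _

lemma hypersurface_isSMulExact : IsSMulExact P (toP (X 0 + X 1)) := by
  intro x hx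
  obtain ⟨p, rfl⟩ := Ideal.Quotient.mk_surjective x
  rw [smul_eq_mul, ← map_mul, Ideal.Quotient.eq_zero_iff_mem, Ideal.mem_span_singleton] at hx
  obtain ⟨q, hq⟩ := hx
  rw [← X_add_X_mul_self, mul_assoc] at hq
  rw [mul_left_cancel₀ (X_add_X_ne_zero k) hq]
  exact ⟨toP q, by rw [smul_eq_mul, map_mul]⟩

/-- The universal property of the hypersurface ring, in terms of `u` and `u + v`. -/
lemma hypersurface_exists_algHom {S : Type*} [CommRing S] [Algebra k S] (s c : S)
    (hc : c * c = 0) : ∃ ψ : P →ₐ[k] S, ψ (toP (X 0)) = s ∧ ψ (toP (X 0 + X 1)) = c := by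
  have htwo : (2 : S) = 0 := by
    have h := congrArg (algebraMap k S) (CharTwo.two_eq_zero (R := k))
    rwa [map_ofNat, map_zero] at h
  refine ⟨Ideal.Quotient.liftₐ _ (aeval ![s, c - s]) fun p hp => ?_, ?_, ?_⟩
  · obtain ⟨q, rfl⟩ := Ideal.mem_span_singleton.1 hp
    have h : aeval ![s, c - s] (X 0 ^ 2 + X 1 ^ 2 : MvPolynomial (Fin 2) k) = 0 := by
      simp only [map_add, map_pow, aeval_X, Matrix.cons_val_zero, Matrix.cons_val_one]
      linear_combination hc + (s ^ 2 - c * s) * htwo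
    rw [map_mul, h, zero_mul]
  · change aeval ![s, c - s] (X 0 : MvPolynomial (Fin 2) k) = s
    simp
  · change aeval ![s, c - s] (X 0 + X 1 : MvPolynomial (Fin 2) k) = c
    simp

end Hypersurface

open MvPolynomial in
/-- Lemma 3.2 of the paper: let `k` be a field of characteristic `2`, let
`P = k[u,v]/(u² + v²)`, and let `Q` be the `k`-subalgebra of `P` generated by the image of
`u + v` (so `Q ≅ k[z]/(z²)`).  A `P`-module `M` that is finite-dimensional over `k` fails to
be free as a `Q`-module if and only if `M` has infinite projective dimension as a
`P`-module.  Moreover the trivial `P`-module `k = P/(u,v)` has infinite projective dimension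
over `P`. -/
theorem not_free_iff_infinite_projective_dimension
    (k : Type*) [Field k] [CharP k 2]
    (M : Type*) [AddCommGroup M]
    [Module (MvPolynomial (Fin 2) k ⧸
      Ideal.span {(X 0 : MvPolynomial (Fin 2) k) ^ 2 + (X 1 : MvPolynomial (Fin 2) k) ^ 2}) M]
    [Module k M]
    [IsScalarTower k
      (MvPolynomial (Fin 2) k ⧸
        Ideal.span {(X 0 : MvPolynomial (Fin 2) k) ^ 2 + (X 1 : MvPolynomial (Fin 2) k) ^ 2}) M]
    [FiniteDimensional k M] :
    (¬ Module.Free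
        (Algebra.adjoin k
          {Ideal.Quotient.mk
            (Ideal.span {(X 0 : MvPolynomial (Fin 2) k) ^ 2
              + (X 1 : MvPolynomial (Fin 2) k) ^ 2})
            (X 0 + X 1)})
        M ↔
      ¬ HasFiniteProjectiveDimension
        (MvPolynomial (Fin 2) k ⧸
          Ideal.span {(X 0 : MvPolynomial (Fin 2) k) ^ 2
            + (X 1 : MvPolynomial (Fin 2) k) ^ 2})
        M) ∧
    ¬ HasFiniteProjectiveDimension
        (MvPolynomial (Fin 2) k ⧸
          Ideal.span {(X 0 : MvPolynomial (Fin 2) k) ^ 2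
            + (X 1 : MvPolynomial (Fin 2) k) ^ 2})
        ((MvPolynomial (Fin 2) k ⧸
            Ideal.span {(X 0 : MvPolynomial (Fin 2) k) ^ 2
              + (X 1 : MvPolynomial (Fin 2) k) ^ 2}) ⧸
          (Ideal.span
            {Ideal.Quotient.mk
                (Ideal.span {(X 0 : MvPolynomial (Fin 2) k) ^ 2
                  + (X 1 : MvPolynomial (Fin 2) k) ^ 2}) (X 0),
              Ideal.Quotient.mk
                (Ideal.span {(X 0 : MvPolynomial (Fin 2) k) ^ 2
                  + (X 1 : MvPolynomial (Fin 2) k) ^ 2}) (X 1)})) := by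
  have hz := hypersurface_mk_mul_self k
  have hP := hypersurface_isSMulExact k
  refine ⟨not_congr ⟨fun hfree => ?_, fun hfin => ?_⟩, fun hfin => ?_⟩
  · obtain ⟨e⟩ := Polynomial.nonempty_algEquiv_of_adjoin (hypersurface_adjoin_eq_top k) hz
      fun s c hc => hypersurface_exists_algHom k s c hc
    exact .of_polynomial_equiv e
  · refine IsSMulExact.free_adjoin hz ?_
    rcases subsingleton_or_nontrivial M with hM | hM
    · exact fun x _ => ⟨0, Subsingleton.elim _ _⟩
    · obtain ⟨m, hm⟩ := exists_ne (0 : M)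
      have := small_of_injective (smul_left_injective k hm)
      have := hypersurface_small k
      exact hfin.isSMulExact hz hP
  · exact hypersurface_residue_not_isSMulExact k (hfin.isSMulExact hz hP)
end
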